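/- Fix s ∈ {1,…,n} and let j₀ be the index of the block containing s. Let w′ be the block-reversal permutation of {1,…,n−1} associated to the block sizes (c_1, …, c_{j₀}−1, …, c_l) (the j₀-th block shrunk by one element, the block being omitted if c_{j₀} = 1). Let p := w^{-1}(s), and define red : {1,…,n}∖{s} → {1,…,n−1} by red(v) = v if v < s and red(v) = v−1 if v > s. Then for all r ∈ {1,…,n−1}: w′(r) = red(w(r)) if r < p, and w′(r) = red(w(r+1)) if r ≥ p. (That is, deleting the value s from the word form of the block-reversal permutation w and standardizing yields the block-reversal permutation of the shrunken block sizes: w_I − s = w_{I′}.) -/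

import Mathlib

open Finset

noncomputable section

/-- Sum of the first `j` block sizes (blocks are 1-indexed). -/
def blkSum (c : ℕ → ℕ) (j : ℕ) : ℕ := ∑ i ∈ Finset.Icc 1 j, c i

/-- Block index of `a ∈ {1,…,n}`: the least `j` with `a ≤ c 1 + ⋯ + c j`. -/
def blk (c : ℕ → ℕ) (a : ℕ) : ℕ := sInf {j | a ≤ blkSum c j}

/-- The block-reversal permutation associated to the block sizes `c`: on the block
`C_j = {b_j, …, b_{j+1}-1}` (where `b_j = blkSum c (j-1) + 1`) it sends
`i ↦ b_j + b_{j+1} - 1 - i`. -/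
def blockRev (c : ℕ → ℕ) (i : ℕ) : ℕ :=
  blkSum c (blk c i - 1) + blkSum c (blk c i) + 1 - i

/-!
It is easier to insert an entry than to delete one. Enlarging the block of `p` by one element
makes room for `p` among the positions and for `s = w(p)` among the values. On earlier blocks
positions and values are unchanged, on later blocks both move up by one, and on the block of `p`,
where `w` is decreasing, the positions before `p` are those whose values move up past `s`. So the
larger permutation is obtained from the smaller one by skipping `p` among the positions and `s`
among the values, and standardization undoes the second skip.
-/

/-- The block `C_{k+1}` of the sizes `c`; the index is shifted by one so that its left end is
`blkSum c k` without subtraction. -/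
def block (c : ℕ → ℕ) (k : ℕ) : Set ℕ := Set.Ioc (blkSum c k) (blkSum c (k + 1))

/-- The block sizes obtained from `c` by adding one element to `block c k`. -/
def growBlock (c : ℕ → ℕ) (k : ℕ) : ℕ → ℕ := c + Pi.single (k + 1) 1

/-- The increasing map of `ℕ` onto `ℕ \ {p}`, as `Fin.succAbove` is for `Fin (n + 1)`. -/
def succAbove (p r : ℕ) : ℕ := if r < p then r else r + 1

/-- The standardization map `red` that closes the gap left by the deleted value `s`. -/
def red (s v : ℕ) : ℕ := if v < s then v else v - 1

theorem succAbove_of_lt {p r : ℕ} (h : r < p) : succAbove p r = r := if_pos h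

theorem succAbove_of_le {p r : ℕ} (h : p ≤ r) : succAbove p r = r + 1 := if_neg h.not_gt

theorem red_succAbove (s v : ℕ) : red s (succAbove s v) = v := by
  unfold red succAbove
  split_ifs <;> omega

section

variable {c : ℕ → ℕ} {a b j k m p r : ℕ}

theorem blkSum_mono (c : ℕ → ℕ) : Monotone (blkSum c) := fun _ _ h =>
  Finset.sum_le_sum_of_subset (Finset.Icc_subset_Icc_right h)

theorem exists_mem_block {l : ℕ} (ha : 1 ≤ a) (hal : a ≤ blkSum c l) : ∃ k, a ∈ block c k := by
  have hmem : a ∈ ⋃ k ∈ Set.Ico 0 l, block c k :=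
    ((blkSum_mono c).biUnion_Ico_Ioc_map_succ 0 l).ge ⟨ha, hal⟩
  obtain ⟨k, -, hk⟩ := Set.mem_iUnion₂.1 hmem
  exact ⟨k, hk⟩

theorem lt_of_mem_block (ha : a ∈ block c j) (hb : b ∈ block c k) (hjk : j < k) : a < b :=
  (ha.2.trans (blkSum_mono c hjk)).trans_lt hb.1

theorem pos_of_mem_block (ha : a ∈ block c k) : 0 < c (k + 1) := by
  have hlt : blkSum c k < blkSum c (k + 1) := ha.1.trans_le ha.2
  simpa [blkSum, Finset.sum_Icc_succ_top] using hlt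

theorem blk_eq_of_mem_block (ha : a ∈ block c k) : blk c a = k + 1 :=
  (Nat.sInf_upward_closed_eq_succ_iff (fun _ _ h hi => hi.trans (blkSum_mono c h)) k).2
    ⟨ha.2, ha.1.not_ge⟩

theorem blockRev_of_mem_block (ha : a ∈ block c k) :
    blockRev c a = blkSum c k + blkSum c (k + 1) + 1 - a := by
  rw [blockRev, blk_eq_of_mem_block ha, Nat.add_sub_cancel]

theorem blockRev_mem_block (ha : a ∈ block c k) : blockRev c a ∈ block c k := by
  rw [blockRev_of_mem_block ha]
  simp only [block, Set.mem_Ioc] at ha ⊢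
  omega

theorem strictAntiOn_blockRev (c : ℕ → ℕ) (k : ℕ) : StrictAntiOn (blockRev c) (block c k) := by
  intro a ha b hb hab
  rw [blockRev_of_mem_block ha, blockRev_of_mem_block hb]
  have hb_le : b ≤ blkSum c (k + 1) := hb.2
  omega

theorem growBlock_sub_single (h : 0 < c (k + 1)) :
    growBlock (c - Pi.single (k + 1) 1) k = c := by
  refine tsub_add_cancel_of_le fun i => ?_
  rw [Pi.single_apply]
  split_ifs with hi
  · exact hi ▸ h
  · exact Nat.zero_le _

theorem blkSum_growBlock (c : ℕ → ℕ) (k j : ℕ) :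
    blkSum (growBlock c k) j = blkSum c j + if k < j then 1 else 0 := by
  simp [growBlock, blkSum, Finset.sum_add_distrib]

theorem blkSum_growBlock_of_le (h : j ≤ k) : blkSum (growBlock c k) j = blkSum c j := by
  rw [blkSum_growBlock, if_neg h.not_gt, add_zero]

theorem blkSum_growBlock_of_lt (h : k < j) : blkSum (growBlock c k) j = blkSum c j + 1 := by
  rw [blkSum_growBlock, if_pos h]

theorem mem_block_growBlock (hr : r ∈ block c m) (hmk : m ≤ k) : r ∈ block (growBlock c k) m := by
  refine ⟨(blkSum_growBlock_of_le hmk).trans_lt hr.1, hr.2.trans ?_⟩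
  rw [blkSum_growBlock]
  exact Nat.le_add_right _ _

theorem succ_mem_block_growBlock (hr : r ∈ block c m) (hkm : k ≤ m) :
    r + 1 ∈ block (growBlock c k) m := by
  constructor
  · rw [blkSum_growBlock]
    have hlt : blkSum c m < r := hr.1
    split_ifs <;> omega
  · rw [blkSum_growBlock_of_lt (Nat.lt_succ_of_le hkm)]
    exact Nat.succ_le_succ hr.2

theorem blockRev_growBlock_of_lt (hr : r ∈ block c m) (hmk : m < k) :
    blockRev (growBlock c k) r = blockRev c r := by
  rw [blockRev_of_mem_block (mem_block_growBlock hr hmk.le), blockRev_of_mem_block hr,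
    blkSum_growBlock_of_le hmk.le, blkSum_growBlock_of_le hmk]

theorem blockRev_growBlock_self (hr : r ∈ block c k) :
    blockRev (growBlock c k) r = blockRev c r + 1 := by
  rw [blockRev_of_mem_block (mem_block_growBlock hr le_rfl), blockRev_of_mem_block hr,
    blkSum_growBlock_of_le le_rfl, blkSum_growBlock_of_lt (Nat.lt_add_one k)]
  have hr_le : r ≤ blkSum c (k + 1) := hr.2
  omega

theorem blockRev_growBlock_succ_self (hr : r ∈ block c k) :
    blockRev (growBlock c k) (r + 1) = blockRev c r := by
  rw [blockRev_of_mem_block (succ_mem_block_growBlock hr le_rfl), blockRev_of_mem_block hr,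
    blkSum_growBlock_of_le le_rfl, blkSum_growBlock_of_lt (Nat.lt_add_one k)]
  omega

theorem blockRev_growBlock_succ_of_gt (hr : r ∈ block c m) (hkm : k < m) :
    blockRev (growBlock c k) (r + 1) = blockRev c r + 1 := by
  rw [blockRev_of_mem_block (succ_mem_block_growBlock hr hkm.le), blockRev_of_mem_block hr,
    blkSum_growBlock_of_lt hkm, blkSum_growBlock_of_lt (hkm.trans (Nat.lt_add_one m))]
  have hr_le : r ≤ blkSum c (m + 1) := hr.2
  omega

theorem blockRev_growBlock_succAbove (hp : p ∈ block (growBlock c k) k) (hr : r ∈ block c m) :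
    blockRev (growBlock c k) (succAbove p r) =
      succAbove (blockRev (growBlock c k) p) (blockRev c r) := by
  have hs := blockRev_mem_block hp
  rcases lt_trichotomy m k with hmk | rfl | hkm
  · have hr' := mem_block_growBlock hr hmk.le
    have hw := blockRev_growBlock_of_lt hr hmk
    have hws := lt_of_mem_block (blockRev_mem_block hr') hs hmk
    rw [hw] at hws
    rw [succAbove_of_lt (lt_of_mem_block hr' hp hmk), hw, succAbove_of_lt hws]
  · have hanti := strictAntiOn_blockRev (growBlock c m) m
    rcases lt_or_ge r p with hrp | hpr
    · have hw := blockRev_growBlock_self hr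
      have hsw := hanti (mem_block_growBlock hr le_rfl) hp hrp
      rw [hw] at hsw
      rw [succAbove_of_lt hrp, hw, succAbove_of_le (Nat.le_of_lt_succ hsw)]
    · have hw := blockRev_growBlock_succ_self hr
      have hws := hanti hp (succ_mem_block_growBlock hr le_rfl) (Nat.lt_succ_of_le hpr)
      rw [hw] at hws
      rw [succAbove_of_le hpr, hw, succAbove_of_lt hws]
  · have hr' := succ_mem_block_growBlock hr hkm.le
    have hw := blockRev_growBlock_succ_of_gt hr hkm
    have hsw := lt_of_mem_block hs (blockRev_mem_block hr') hkm
    rw [hw] at hsw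
    rw [succAbove_of_le (Nat.le_of_lt_succ (lt_of_mem_block hp hr' hkm)), hw,
      succAbove_of_le (Nat.le_of_lt_succ hsw)]

end

/-- Lemma 3.7 (i): deleting the value `s` from the word form of the block-reversal
permutation `w = w_I` and standardizing yields the block-reversal permutation `w_{I'}` of
the block sizes with the block of `s` shrunk by one: `w_I - s = w_{I'}`. -/
theorem block_reversal_delete_entry
    (l : ℕ) (hl : 1 ≤ l) (c : ℕ → ℕ) (hc : ∀ i ∈ Finset.Icc 1 l, 0 < c i)
    (n : ℕ) (hn : n = blkSum c l)
    (s : ℕ) (hs1 : 1 ≤ s) (hsn : s ≤ n)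
    (c' : ℕ → ℕ) (hc' : ∀ j, c' j = c j - if j = blk c s then 1 else 0)
    (p : ℕ) (hp1 : 1 ≤ p) (hpn : p ≤ n) (hp : blockRev c p = s) :
    ∀ r, 1 ≤ r → r ≤ n - 1 →
      (r < p →
        blockRev c' r = if blockRev c r < s then blockRev c r else blockRev c r - 1) ∧
      (p ≤ r →
        blockRev c' r =
          if blockRev c (r + 1) < s then blockRev c (r + 1) else blockRev c (r + 1) - 1) := by
  intro r hr1 hrn
  subst hn hp
  obtain ⟨k, hpk⟩ := exists_mem_block hp1 hpn
  have hblk : blk c (blockRev c p) = k + 1 := blk_eq_of_mem_block (blockRev_mem_block hpk)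
  obtain rfl : c = growBlock c' k := by
    have hsub : c' = c - Pi.single (k + 1) 1 := by
      ext j
      rw [hc', hblk, Pi.sub_apply, Pi.single_apply]
    rw [hsub, growBlock_sub_single (pos_of_mem_block hpk)]
  obtain ⟨m, hrm⟩ : ∃ m, r ∈ block c' m := by
    refine exists_mem_block (l := l) hr1 ?_
    rw [blkSum_growBlock] at hrn
    split_ifs at hrn <;> omega
  have hred : blockRev c' r =
      red (blockRev (growBlock c' k) p) (blockRev (growBlock c' k) (succAbove p r)) := by
    rw [blockRev_growBlock_succAbove hpk hrm, red_succAbove]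
  refine ⟨fun hrp => ?_, fun hpr => ?_⟩
  · rwa [succAbove_of_lt hrp] at hred
  · rwa [succAbove_of_le hpr] at hred

end
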